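/- Let d ≥ 1 be an integer, α ∈ (0, 1/d), and for λ > 0 let w(λ) be the weight sequence w_n(λ) = 1 + λ/n^{1−α} for n ≥ 1. Then the family (B_{w(λ₁)} × ⋯ × B_{w(λ_d)})_{λ∈(0,∞)^d} admits a common hypercyclic algebra on c₀(ℕ)^d for the coordinatewise product. -/

import Mathlib

open scoped ENNReal ZeroAtInfty
open Finset

noncomputable section

/-- The space `c₀(ℕ)` of complex sequences vanishing at infinity, with the sup norm. -/
abbrev c0C : Type := C₀(ℕ, ℂ)

/-- `T` is the product operator `B_{w(lam 0)} × ⋯ × B_{w(lam (d-1))}` of weighted backward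
shifts, the weight sequence of the `i`-th factor being `(w (lam i) n)_{n ≥ 1}`. -/
def IsProductShiftC0 (d : ℕ) (w : ℝ → ℕ → ℝ)
    (T : (Fin d → c0C) →L[ℂ] (Fin d → c0C)) (lam : Fin d → ℝ) : Prop :=
  ∀ (v : Fin d → c0C) (i : Fin d) (n : ℕ),
    (T v) i n = (w (lam i) (n + 1) : ℂ) * v i (n + 1)

/-- The family `T lam`, `lam ∈ S`, admits a common hypercyclic algebra for the coordinatewise
product: there is a non-unital subalgebra `A ≠ {0}` of `(c₀(ℕ))^d` (closed under addition,
scalar multiplication and the componentwise coordinatewise product) every nonzero element of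
which is a common hypercyclic vector for the family. -/
def CommonHypercyclicAlgebraCWC0 (d : ℕ) (S : Set (Fin d → ℝ))
    (T : (Fin d → ℝ) → ((Fin d → c0C) →L[ℂ] (Fin d → c0C))) : Prop :=
  ∃ A : Set (Fin d → c0C),
    (0 : Fin d → c0C) ∈ A ∧
    (∀ x ∈ A, ∀ y ∈ A, x + y ∈ A) ∧
    (∀ (c : ℂ), ∀ x ∈ A, c • x ∈ A) ∧
    (∀ x ∈ A, ∀ y ∈ A, ∃ z ∈ A, ∀ (i : Fin d) (n : ℕ), z i n = x i n * y i n) ∧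
    (∃ x ∈ A, x ≠ 0) ∧
    (∀ x ∈ A, x ≠ 0 → ∀ lam ∈ S, Dense (Set.range fun n : ℕ => ((T lam) ^ (n + 1)) x))

/-!
Nonzero polynomials in `x` without constant term are hypercyclic as soon as the orbits of all powers
of `x` cluster everywhere: `B_w ^ N (u * v)` is the product of `B_w ^ N u` and the
`N`-fold shift of `v`, which tends to `0`, so that the term of lowest order decides. By Baire and
Lindelöf it remains to find, near any vector and for all `λ` in a small cube at once, some `x`
whose `(k + 1)`-st power is moved close to a prescribed `y` by a power of `B_w(λ)`. For this, `x`
carries a block `(y / product of weights) ^ (1 / (k + 1))` for each point of a net of the cube, at a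
position which is also the time at which that block is moved to the origin.

Products of `n` weights grow like `exp (n ^ α)`, and their logarithms are Lipschitz in `λ` at the
scale `n ^ α`. Hence the mesh has to be much smaller than `n ^ (-α)`, and a later block is
negligible if the distance between the two net points, times `n ^ α`, is dominated by the time gap
to the power `α`. Subdivide the cube repeatedly into `B ^ d` cubes, spreading times by a factor
`Q ≥ 2 * B ^ d` at each step. Both conditions hold when `Q ^ α < B`, which is possible because
`α * d < 1`.
-/

open scoped Polynomial
open Filter Topology

section PolynomialsInAnAlgebra

variable {𝕜 E : Type*} [Field 𝕜] [NonUnitalRing E] [Module 𝕜 E] [SMulCommClass 𝕜 E E]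

/-- `mulAeval x p` is `x * p(x)`, the value at `x` of the polynomial `X * p`. All polynomials
without constant term have this shape, so the range of `mulAeval x` is the subalgebra generated
by `x`. As `E` has no unit, `p` is evaluated at the operator of left multiplication by `x`. -/
def mulAeval (x : E) : 𝕜[X] →ₗ[𝕜] E :=
  LinearMap.applyₗ x ∘ₗ (Polynomial.aeval (LinearMap.mulLeft 𝕜 x)).toLinearMap

lemma mulAeval_apply (x : E) (p : 𝕜[X]) :
    mulAeval x p = Polynomial.aeval (LinearMap.mulLeft 𝕜 x) p x :=
  rfl

lemma mulAeval_one (x : E) : mulAeval x (1 : 𝕜[X]) = x := by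
  simp only [mulAeval_apply, map_one, Module.End.one_apply]

lemma mulAeval_X_mul (x : E) (p : 𝕜[X]) : mulAeval x (Polynomial.X * p) = x * mulAeval x p := by
  simp only [mulAeval_apply, map_mul, Polynomial.aeval_X, Module.End.mul_apply,
    LinearMap.mulLeft_apply]

lemma mulAeval_X_pow_succ (x : E) (k : ℕ) :
    mulAeval x (Polynomial.X ^ (k + 1) : 𝕜[X]) = x * mulAeval x (Polynomial.X ^ k : 𝕜[X]) := by
  rw [pow_succ', mulAeval_X_mul]

lemma continuous_mulAeval_X_pow [TopologicalSpace E] [ContinuousMul E] (k : ℕ) :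
    Continuous fun x : E => mulAeval x (Polynomial.X ^ k : 𝕜[X]) := by
  induction k with
  | zero => simpa only [pow_zero, mulAeval_one] using continuous_id'
  | succ k ih =>
    simp only [mulAeval_X_pow_succ]
    exact continuous_id.mul ih

lemma exists_eq_X_pow_mul_C_add_X_mul {p : 𝕜[X]} (hp : p ≠ 0) :
    ∃ (k : ℕ) (a : 𝕜) (q : 𝕜[X]), a ≠ 0 ∧
      p = Polynomial.X ^ k * (Polynomial.C a + Polynomial.X * q) := by
  obtain ⟨q, hpq, hq⟩ := p.exists_eq_pow_rootMultiplicity_mul_and_not_dvd hp 0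
  rw [Polynomial.C_0, sub_zero] at hpq hq
  refine ⟨p.rootMultiplicity 0, q.coeff 0, q.divX, mt Polynomial.X_dvd_iff.mpr hq, ?_⟩
  rwa [add_comm, Polynomial.X_mul_divX_add]

variable [IsScalarTower 𝕜 E E]

lemma aeval_mulLeft_mul (x u v : E) (p : 𝕜[X]) :
    Polynomial.aeval (LinearMap.mulLeft 𝕜 x) p u * v =
      Polynomial.aeval (LinearMap.mulLeft 𝕜 x) p (u * v) := by
  induction p using Polynomial.induction_on' generalizing u with
  | add p q hp hq => simp only [map_add, LinearMap.add_apply, add_mul, hp, hq]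
  | monomial n a =>
    induction n generalizing u with
    | zero => simp [smul_mul_assoc]
    | succ n ih => simpa [pow_succ, mul_assoc] using ih (x * u)

lemma mulAeval_mul_mulAeval (x : E) (p q : 𝕜[X]) :
    mulAeval x p * mulAeval x q = mulAeval x (p * (Polynomial.X * q)) := by
  rw [mulAeval_apply x p, aeval_mulLeft_mul, ← mulAeval_X_mul]
  simp only [mulAeval_apply, map_mul, Module.End.mul_apply]

lemma mulAeval_X_pow_mul_C_add_X_mul (x : E) (k : ℕ) (a : 𝕜) (q : 𝕜[X]) :
    mulAeval x (Polynomial.X ^ k * (Polynomial.C a + Polynomial.X * q)) =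
      a • mulAeval x (Polynomial.X ^ k : 𝕜[X]) +
        mulAeval x (Polynomial.X ^ k : 𝕜[X]) * mulAeval x q := by
  rw [mulAeval_mul_mulAeval, mul_add, map_add, mul_comm _ (Polynomial.C a),
    ← Polynomial.smul_eq_C_mul, map_smul]

section Hypercyclicity

variable [TopologicalSpace E] [ContinuousAdd E] [ContinuousMul E] [ContinuousConstSMul 𝕜 E]

/-- `x` is power universal for `T` if every point of `E` is a cluster point of the orbit under `T`
of each power of `x`, the `(k + 1)`-st power being `mulAeval x (X ^ k)`. -/
def IsPowerUniversal (T : E →L[𝕜] E) (x : E) : Prop :=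
  ∀ (k : ℕ) (y : E),
    MapClusterPt y atTop fun N : ℕ => (T ^ N) (mulAeval x (Polynomial.X ^ k : 𝕜[X]))

/-- The lowest-order term of `p` decides: the higher-order ones carry an extra factor on which `T`
acts by `s`, and therefore tend to `0`. -/
theorem IsPowerUniversal.dense_range_pow_mulAeval {T : E →L[𝕜] E} {x : E}
    (hx : IsPowerUniversal T x)
    (hT : ∀ v : E, ∃ s : ℕ → E, Tendsto s atTop (𝓝 0) ∧
      ∀ (N : ℕ) (u : E), (T ^ N) (u * v) = (T ^ N) u * s N)
    {p : 𝕜[X]} (hp : p ≠ 0) :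
    Dense (Set.range fun n : ℕ => (T ^ (n + 1)) (mulAeval x p)) := by
  obtain ⟨k, a, q, ha, rfl⟩ := exists_eq_X_pow_mul_C_add_X_mul hp
  obtain ⟨s, hs, hTs⟩ := hT (mulAeval x q)
  intro y
  obtain ⟨U, hU, hlead⟩ := mapClusterPt_iff_ultrafilter.mp (hx k (a⁻¹ • y))
  have htotal : Tendsto (fun N => (T ^ N) (mulAeval x
      (Polynomial.X ^ k * (Polynomial.C a + Polynomial.X * q)))) U (𝓝 y) := by
    simpa only [mulAeval_X_pow_mul_C_add_X_mul, map_add, map_smul, hTs, smul_inv_smul₀ ha, mul_zero,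
      add_zero] using (hlead.const_smul a).add (hlead.mul (hs.mono_left hU))
  refine mem_closure_of_tendsto htotal ?_
  filter_upwards [hU (eventually_ge_atTop 1)] with N hN
  exact ⟨N - 1, by simp only [Nat.sub_add_cancel hN]⟩

end Hypercyclicity

lemma isPowerUniversal_of_dense {E : Type*} [NonUnitalRing E] [Module 𝕜 E]
    [SMulCommClass 𝕜 E E] [PseudoMetricSpace E] [ContinuousAdd E]
    {D : Set E} (hD : Dense D) {T : E →L[𝕜] E} {x : E}
    (h : ∀ k, ∀ y ∈ D, ∀ n : ℕ, ∃ N ≥ n,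
      dist ((T ^ N) (mulAeval x (Polynomial.X ^ k : 𝕜[X]))) y < 1 / (n + 1)) :
    IsPowerUniversal T x := by
  intro k y
  have hcluster : D ⊆ {y | MapClusterPt y atTop fun N : ℕ =>
      (T ^ N) (mulAeval x (Polynomial.X ^ k : 𝕜[X]))} := by
    intro y hy
    refine Metric.nhds_basis_ball_inv_nat_succ.mapClusterPt_iff_frequently.mpr fun m _ =>
      frequently_atTop.mpr fun n => ?_
    obtain ⟨N, hN, hdist⟩ := h k y hy (max m n)
    refine ⟨N, (le_max_right m n).trans hN, hdist.trans_le ?_⟩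
    exact Nat.one_div_le_one_div (le_max_left m n)
  exact isClosed_setOfPred_clusterPt.closure_subset_iff.mpr hcluster (hD y)

end PolynomialsInAnAlgebra

lemma eventually_forall_mem_of_forall_exists_nhdsWithin {Λ X : Type*} [TopologicalSpace Λ]
    [HereditarilyLindelofSpace Λ] {l : Filter X} [CountableInterFilter l] {S : Set Λ}
    {P : Λ → X → Prop} (h : ∀ a ∈ S, ∃ V ∈ 𝓝[S] a, ∀ᶠ x in l, ∀ b ∈ V, P b x) :
    ∀ᶠ x in l, ∀ a ∈ S, P a x := by
  refine (HereditarilyLindelofSpace.isLindelof S).induction_on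
    (p := fun V => ∀ᶠ x in l, ∀ b ∈ V, P b x) ?_ ?_ h
  · exact fun V W hVW hW => hW.mono fun x hx b hb => hx b (hVW hb)
  · intro 𝒱 h𝒱 hP
    filter_upwards [(eventually_countable_ball h𝒱).mpr hP] with x hx b hb
    obtain ⟨V, hV, hbV⟩ := hb
    exact hx V hV b hbV

section ZeroAtInfty

lemma dist_pi_zeroAtInfty_le_iff {ι X β : Type*} [Fintype ι] [TopologicalSpace X]
    [PseudoMetricSpace β] [Zero β] {x y : ι → C₀(X, β)} {C : ℝ} (hC : 0 ≤ C) :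
    dist x y ≤ C ↔ ∀ i m, dist (x i m) (y i m) ≤ C := by
  simp only [dist_pi_le_iff hC, ← ZeroAtInftyContinuousMap.dist_toBCF_eq_dist,
    BoundedContinuousFunction.dist_le hC]
  rfl

lemma norm_apply_apply_le {ι X β : Type*} [Fintype ι] [TopologicalSpace X]
    [SeminormedAddCommGroup β] (y : ι → C₀(X, β)) (i : ι) (m : X) : ‖y i m‖ ≤ ‖y‖ := by
  simpa using (dist_pi_zeroAtInfty_le_iff (y := 0) (norm_nonneg y)).mp (dist_zero_right y).le i m

lemma eventually_forall_norm_lt {ι β : Type*} [Finite ι] [SeminormedAddCommGroup β]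
    (x : ι → C₀(ℕ, β)) {ε : ℝ} (hε : 0 < ε) : ∀ᶠ n in atTop, ∀ i, ‖x i n‖ < ε := by
  refine eventually_all.mpr fun i => ?_
  have hx : Tendsto (x i) atTop (𝓝 0) := cocompact_eq_atTop (α := ℕ) ▸ zero_at_infty (x i)
  exact hx.norm.eventually_lt_const (by rwa [norm_zero])

/-- The sequence `u` cut off from the index `N` on, as an element of `c₀(ℕ)`. -/
def truncC0 (u : ℕ → ℂ) (N : ℕ) : c0C where
  toFun n := if n < N then u n else 0
  continuous_toFun := continuous_of_discreteTopology
  zero_at_infty' := by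
    rw [cocompact_eq_atTop]
    refine tendsto_const_nhds.congr' ?_
    filter_upwards [eventually_ge_atTop N] with n hn
    rw [if_neg hn.not_gt]

lemma truncC0_apply (u : ℕ → ℂ) (N n : ℕ) : truncC0 u N n = if n < N then u n else 0 :=
  rfl

lemma dense_setOf_finite_support (ι : Type*) [Finite ι] :
    Dense {y : ι → c0C | ∃ M, ∀ i m, M ≤ m → y i m = 0} := by
  have := Fintype.ofFinite ι
  refine Metric.dense_iff.mpr fun x ε hε => ?_
  obtain ⟨N, hN⟩ := (eventually_forall_norm_lt x (half_pos hε)).exists_forall_of_atTop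
  refine ⟨fun i => truncC0 (x i) N, ?_, N, fun i m hm => if_neg hm.not_gt⟩
  refine ((dist_pi_zeroAtInfty_le_iff (half_pos hε).le).mpr fun i m => ?_).trans_lt
    (half_lt_self hε)
  rw [truncC0_apply]
  split_ifs with hm
  · simpa only [dist_self] using (half_pos hε).le
  · simpa only [dist_zero_left] using (hN m (not_lt.mp hm) i).le

lemma truncC0_mem_span (u : ℕ → ℂ) (N : ℕ) :
    truncC0 u N ∈ Submodule.span ℂ (Set.range fun k => truncC0 (Pi.single k 1) (k + 1)) := by
  induction N with
  | zero =>
    convert Submodule.zero_mem _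
    ext n
    simp [truncC0_apply]
  | succ N ih =>
    have hstep : truncC0 u (N + 1) = truncC0 u N + u N • truncC0 (Pi.single N 1) (N + 1) := by
      ext n
      rcases lt_trichotomy n N with hn | rfl | hn
      · simp [truncC0_apply, hn, hn.ne, hn.trans (Nat.lt_succ_self N)]
      · simp [truncC0_apply]
      · simp [truncC0_apply, hn.not_gt, (Nat.succ_le_of_lt hn).not_gt]
    rw [hstep]
    exact Submodule.add_mem _ ih (Submodule.smul_mem _ _ (Submodule.subset_span ⟨N, rfl⟩))

instance : TopologicalSpace.SeparableSpace c0C := by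
  have hspan := ((Set.countable_range fun k => truncC0 (Pi.single k 1) (k + 1)).isSeparable.span
    (R := ℂ)).closure
  refine TopologicalSpace.isSeparable_univ_iff.mp (hspan.mono fun f _ => ?_)
  refine Metric.mem_closure_iff.mpr fun ε hε => ?_
  obtain ⟨y, hy, M, hM⟩ := Metric.dense_iff.mp (dense_setOf_finite_support Unit) (fun _ => f) ε hε
  have hyM : y () = truncC0 (y ()) M := by
    ext n
    rw [truncC0_apply]
    split_ifs with hn
    · rfl
    · exact hM () n (not_lt.mp hn)
  refine ⟨y (), hyM ▸ truncC0_mem_span _ M, ?_⟩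
  rw [dist_comm]
  exact (dist_le_pi_dist y (fun _ => f) ()).trans_lt (Metric.mem_ball.mp hy)

lemma mulAeval_X_pow_apply {ι : Type*} (x : ι → c0C) (k : ℕ) (i : ι) (n : ℕ) :
    mulAeval x (Polynomial.X ^ k : ℂ[X]) i n = x i n ^ (k + 1) := by
  induction k with
  | zero => simp only [pow_zero, mulAeval_one, zero_add, pow_one]
  | succ k ih =>
    rw [mulAeval_X_pow_succ, Pi.mul_apply, ZeroAtInftyContinuousMap.mul_apply, ih,
      pow_succ' _ (k + 1)]

end ZeroAtInfty

section WeightedShifts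

/-- The product `w_{m+1} ⋯ w_{m+N}` of weights, by which the `N`-th power of the weighted backward
shift multiplies the entry that it moves from position `m + N` to position `m`. -/
def weightProd (w : ℕ → ℝ) (m N : ℕ) : ℝ :=
  ∏ j ∈ range N, w (m + j + 1)

lemma weightProd_succ' (w : ℕ → ℝ) (m N : ℕ) :
    weightProd w m (N + 1) = w (m + 1) * weightProd w (m + 1) N := by
  rw [weightProd, prod_range_succ', mul_comm]
  simp only [weightProd, add_zero, add_comm, add_left_comm]

lemma weightProd_zero_mul (w : ℕ → ℝ) (m N : ℕ) :
    weightProd w 0 m * weightProd w m N = weightProd w 0 (m + N) := by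
  simp only [weightProd, prod_range_add, zero_add]

lemma weightProd_nonneg {w : ℕ → ℝ} (hw : ∀ n, 0 ≤ w (n + 1)) (m N : ℕ) : 0 ≤ weightProd w m N :=
  prod_nonneg fun j _ => hw (m + j)

lemma weightProd_pos {w : ℕ → ℝ} (hw : ∀ n, 0 < w (n + 1)) (m N : ℕ) : 0 < weightProd w m N :=
  prod_pos fun j _ => hw (m + j)

lemma weightProd_le_pow {w : ℕ → ℝ} {A : ℝ} (hw : ∀ n, 0 ≤ w (n + 1)) (hA : ∀ n, w (n + 1) ≤ A)
    (m N : ℕ) : weightProd w m N ≤ A ^ N := by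
  simpa only [prod_const, card_range, weightProd] using
    prod_le_prod (s := range N) (fun j _ => hw (m + j)) (fun j _ => hA (m + j))

variable {d : ℕ} {w : ℝ → ℕ → ℝ} {T : (Fin d → c0C) →L[ℂ] (Fin d → c0C)} {lam : Fin d → ℝ}

lemma IsProductShiftC0.pow_apply (hT : IsProductShiftC0 d w T lam) (N : ℕ) (v : Fin d → c0C)
    (i : Fin d) (m : ℕ) : (T ^ N) v i m = weightProd (w (lam i)) m N * v i (m + N) := by
  induction N generalizing m with
  | zero => simp [weightProd]
  | succ N ih =>
    rw [pow_succ', mul_apply_eq_comp, hT, ih, weightProd_succ', add_right_comm m 1 N]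
    push_cast
    ring_nf

lemma IsProductShiftC0.exists_tendsto_zero_pow_mul (hT : IsProductShiftC0 d w T lam)
    (v : Fin d → c0C) : ∃ s : ℕ → Fin d → c0C, Tendsto s atTop (𝓝 0) ∧
      ∀ (N : ℕ) (u : Fin d → c0C), (T ^ N) (u * v) = (T ^ N) u * s N := by
  refine ⟨fun N i => (v i).comp ⟨⟨(· + N), continuous_of_discreteTopology⟩, ?_⟩, ?_, fun N u => ?_⟩
  · simpa only [cocompact_eq_atTop] using tendsto_add_atTop_nat N
  · refine Metric.tendsto_atTop.mpr fun ε hε => ?_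
    obtain ⟨N₀, hN₀⟩ := (eventually_forall_norm_lt v (half_pos hε)).exists_forall_of_atTop
    refine ⟨N₀, fun N hN => ?_⟩
    refine ((dist_pi_zeroAtInfty_le_iff (half_pos hε).le).mpr fun i m => ?_).trans_lt
      (half_lt_self hε)
    exact (dist_zero_right (v i (m + N))).trans_le (hN₀ _ (hN.trans (Nat.le_add_left N m)) i).le
  · ext i m
    simp only [hT.pow_apply, Pi.mul_apply, ZeroAtInftyContinuousMap.mul_apply, mul_assoc]
    rfl

lemma IsProductShiftC0.dist_pow_apply_le (hT : IsProductShiftC0 d w T lam) {A : ℝ} (hA : 0 ≤ A)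
    (hw0 : ∀ i n, 0 ≤ w (lam i) (n + 1)) (hwA : ∀ i n, w (lam i) (n + 1) ≤ A) (N : ℕ)
    (u v : Fin d → c0C) : dist ((T ^ N) u) ((T ^ N) v) ≤ A ^ N * dist u v := by
  refine (dist_pi_zeroAtInfty_le_iff (by positivity)).mpr fun i m => ?_
  have hW0 := weightProd_nonneg (hw0 i) m N
  calc dist ((T ^ N) u i m) ((T ^ N) v i m)
      = weightProd (w (lam i)) m N * dist (u i (m + N)) (v i (m + N)) := by
        simp only [hT.pow_apply, dist_eq_norm, ← mul_sub, norm_mul, Complex.norm_real,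
          Real.norm_of_nonneg hW0]
    _ ≤ A ^ N * dist u v := by
        refine mul_le_mul (weightProd_le_pow (hw0 i) (hwA i) m N) ?_ dist_nonneg (by positivity)
        exact (dist_pi_zeroAtInfty_le_iff dist_nonneg).mp le_rfl i (m + N)

end WeightedShifts

section StretchedExponentialWeights

/-- The weight sequences `w a`, `a ∈ I`, have partial products growing at least like the stretched
exponential `exp (n ^ α / A)`, and these products depend on `a` in a log-Lipschitz way at scale
`n ^ α`. A single constant `A` serves all the bounds. Weights are indexed from `1`, so that `w a 0`
is irrelevant. -/
structure IsStretchedExpWeight (α A : ℝ) (w : ℝ → ℕ → ℝ) (I : Set ℝ) : Prop where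
  one_le : 1 ≤ A
  pos : ∀ a ∈ I, ∀ n, 0 < w a (n + 1)
  le : ∀ a ∈ I, ∀ n, w a (n + 1) ≤ A
  exp_le : ∀ a ∈ I, ∀ n : ℕ, Real.exp ((n : ℝ) ^ α / A) ≤ weightProd (w a) 0 n
  le_exp_mul : ∀ a ∈ I, ∀ b ∈ I, ∀ m N : ℕ, weightProd (w a) m N ≤
    Real.exp (A * |a - b| * ((m + N : ℕ) : ℝ) ^ α) * weightProd (w b) m N

namespace IsStretchedExpWeight

variable {α A a b : ℝ} {w : ℝ → ℕ → ℝ} {I : Set ℝ}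

lemma mono (hw : IsStretchedExpWeight α A w I) {A' : ℝ} {J : Set ℝ} (hA : A ≤ A') (hJ : J ⊆ I) :
    IsStretchedExpWeight α A' w J where
  one_le := hw.one_le.trans hA
  pos a ha := hw.pos a (hJ ha)
  le a ha n := (hw.le a (hJ ha) n).trans hA
  exp_le a ha n := by
    refine le_trans ?_ (hw.exp_le a (hJ ha) n)
    have := hw.one_le
    gcongr
  le_exp_mul a ha b hb m N := by
    refine (hw.le_exp_mul a (hJ ha) b (hJ hb) m N).trans ?_
    have := (weightProd_pos (hw.pos b (hJ hb)) m N).le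
    gcongr

lemma weightProd_div_weightProd_le (hw : IsStretchedExpWeight α A w I) (ha : a ∈ I) (hb : b ∈ I)
    {g N m N' : ℕ} (hg : g + N = m + N') :
    weightProd (w a) g N / weightProd (w b) m N' ≤
      A ^ m * Real.exp (A * |a - b| * ((m + N' : ℕ) : ℝ) ^ α - (g : ℝ) ^ α / A) := by
  have : 0 < A := one_pos.trans_le hw.one_le
  have hbm := weightProd_pos (hw.pos b hb) m N'
  have hcompare := hw.le_exp_mul a ha b hb 0 (m + N')
  rw [zero_add] at hcompare
  rw [div_le_iff₀ hbm, Real.exp_sub, mul_div_assoc', div_mul_eq_mul_div,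
    le_div_iff₀ (Real.exp_pos _)]
  calc weightProd (w a) g N * Real.exp ((g : ℝ) ^ α / A)
      ≤ weightProd (w a) g N * weightProd (w a) 0 g := by
        gcongr
        · exact (weightProd_pos (hw.pos a ha) g N).le
        · exact hw.exp_le a ha g
    _ = weightProd (w a) 0 (m + N') := by rw [mul_comm, weightProd_zero_mul, hg]
    _ ≤ Real.exp (A * |a - b| * ((m + N' : ℕ) : ℝ) ^ α) *
        (weightProd (w b) 0 m * weightProd (w b) m N') := by rwa [weightProd_zero_mul]
    _ ≤ Real.exp (A * |a - b| * ((m + N' : ℕ) : ℝ) ^ α) * (A ^ m * weightProd (w b) m N') := by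
        gcongr
        exact weightProd_le_pow (fun n => (hw.pos b hb n).le) (hw.le b hb) 0 m
    _ = A ^ m * Real.exp (A * |a - b| * ((m + N' : ℕ) : ℝ) ^ α) * weightProd (w b) m N' := by ring

lemma weightProd_div_weightProd_le_of_far (hw : IsStretchedExpWeight α A w I) (hα : 0 ≤ α)
    (ha : a ∈ I) (hb : b ∈ I) {g N m N' L M : ℕ} (hg : g + N = m + N') (hL : L ≤ g) (hm : m ≤ M)
    (hab : |a - b| * ((m + N' : ℕ) : ℝ) ^ α ≤ 1 / (2 * A ^ 2) * (g : ℝ) ^ α) :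
    weightProd (w a) g N / weightProd (w b) m N' ≤
      A ^ M * Real.exp (-((L : ℝ) ^ α / (2 * A))) := by
  have hA : 0 < A := one_pos.trans_le hw.one_le
  have hLg : (L : ℝ) ^ α / (2 * A) ≤ (g : ℝ) ^ α / (2 * A) := by gcongr
  have hexp : A * |a - b| * ((m + N' : ℕ) : ℝ) ^ α ≤ (g : ℝ) ^ α / (2 * A) := by
    calc A * |a - b| * ((m + N' : ℕ) : ℝ) ^ α
        ≤ A * (1 / (2 * A ^ 2) * (g : ℝ) ^ α) := by rw [mul_assoc]; gcongr
      _ = (g : ℝ) ^ α / (2 * A) := by field_simp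
  have hhalf : (g : ℝ) ^ α / A = 2 * ((g : ℝ) ^ α / (2 * A)) := by field_simp
  refine (hw.weightProd_div_weightProd_le ha hb hg).trans ?_
  gcongr
  · exact hw.one_le
  · linarith

lemma inv_weightProd_le (hw : IsStretchedExpWeight α A w I) (hα : 0 ≤ α) (hb : b ∈ I)
    {m N L M : ℕ} (hL : L ≤ N) (hm : m ≤ M) :
    (weightProd (w b) m N)⁻¹ ≤ A ^ M * Real.exp (-((L : ℝ) ^ α / (2 * A))) := by
  have h := hw.weightProd_div_weightProd_le_of_far hα hb hb (add_zero (m + N))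
    (hL.trans (Nat.le_add_left N m)) hm (by
      rw [sub_self, abs_zero, zero_mul]
      positivity)
  simpa only [weightProd, range_zero, prod_empty, one_div] using h

lemma abs_weightProd_div_sub_one_le (hw : IsStretchedExpWeight α A w I) (ha : a ∈ I) (hb : b ∈ I)
    {m N : ℕ} {t : ℝ} (ht : A * |a - b| * ((m + N : ℕ) : ℝ) ^ α ≤ t) :
    |weightProd (w a) m N / weightProd (w b) m N - 1| ≤ Real.exp t - 1 := by
  have hWa := weightProd_pos (hw.pos a ha) m N
  have hWb := weightProd_pos (hw.pos b hb) m N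
  have hab : weightProd (w a) m N ≤ Real.exp t * weightProd (w b) m N :=
    (hw.le_exp_mul a ha b hb m N).trans (by gcongr)
  have hba : weightProd (w b) m N ≤ Real.exp t * weightProd (w a) m N :=
    (hw.le_exp_mul b hb a ha m N).trans (by rw [abs_sub_comm]; gcongr)
  rw [div_sub_one hWb.ne', abs_div, abs_of_pos hWb, div_le_iff₀ hWb, abs_le]
  constructor
  · nlinarith
  · linarith

end IsStretchedExpWeight

end StretchedExponentialWeights

section Nets

variable {X : Type*} [PseudoMetricSpace X]

/-- A net of mesh `r / B ^ S` in the ball of radius `r` about `x`, obtained by `S` successive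
subdivisions, with codes for its points. Points separated at the `(S - s)`-th subdivision, which
are at distance at most `2 r B ^ (s + 1 - S)`, have codes that are at least `Q ^ s / 2` apart. -/
structure CodedNet (B Q S : ℕ) (x : X) (r : ℝ) where
  Cell : Type
  center : Cell → X
  code : Cell → ℕ
  center_mem : ∀ p, center p ∈ Metric.closedBall x r
  two_mul_code_le : ∀ p, 2 * code p ≤ Q ^ S
  exists_dist_le : ∀ y ∈ Metric.closedBall x r, ∃ p, dist y (center p) ≤ r / (B : ℝ) ^ S
  separated : ∀ p p', p ≠ p' → ∃ s < S,
    dist (center p) (center p') ≤ 2 * r * (B : ℝ) ^ (s + 1) / (B : ℝ) ^ S ∧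
      Q ^ s ≤ 2 * Nat.dist (code p) (code p')

lemma two_mul_mul_add_le {K Q q j a : ℕ} (hQ : 2 * K ≤ Q) (hj : j < K) (ha : 2 * a ≤ q) :
    2 * (j * q + a) ≤ Q * q := by
  nlinarith

lemma le_two_mul_dist_mul_add {q j j' a a' : ℕ} (hj : j ≠ j') (ha : 2 * a ≤ q) (ha' : 2 * a' ≤ q) :
    q ≤ 2 * Nat.dist (j * q + a) (j' * q + a') := by
  wlog hlt : j < j' generalizing j j' a a'
  · rw [Nat.dist_comm]
    exact this hj.symm ha' ha (hj.symm.lt_of_le (not_lt.mp hlt))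
  have hstep : (j + 1) * q ≤ j' * q := Nat.mul_le_mul_right q hlt
  rw [Nat.dist]
  lia

/-- The net of the whole ball obtained from nets of the balls of its first subdivision. Their codes
are shifted by multiples of `Q ^ S` to keep them apart. -/
def CodedNet.merge {B K Q S : ℕ} (hB : 0 < B) (hQ : 2 * K ≤ Q) {x : X} {r : ℝ} {c : Fin K → X}
    (hc : Metric.closedBall x r = ⋃ j, Metric.closedBall (c j) (r / B))
    (net : ∀ j, CodedNet B Q S (c j) (r / B)) : CodedNet B Q (S + 1) x r where
  Cell := Σ j, (net j).Cell
  center p := (net p.1).center p.2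
  code p := p.1 * Q ^ S + (net p.1).code p.2
  center_mem p := hc ▸ Set.mem_iUnion.mpr ⟨p.1, (net p.1).center_mem p.2⟩
  two_mul_code_le p := by
    rw [pow_succ']
    exact two_mul_mul_add_le hQ p.1.isLt ((net p.1).two_mul_code_le p.2)
  exists_dist_le y hy := by
    obtain ⟨j, hj⟩ := Set.mem_iUnion.mp (hc ▸ hy)
    obtain ⟨q, hq⟩ := (net j).exists_dist_le y hj
    exact ⟨⟨j, q⟩, by rwa [pow_succ', ← div_div]⟩
  separated := by
    have : (0 : ℝ) < B := Nat.cast_pos.mpr hB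
    have hmem (j : Fin K) (q : (net j).Cell) : dist ((net j).center q) x ≤ r :=
      Metric.mem_closedBall.mp (hc ▸ Set.mem_iUnion.mpr ⟨j, (net j).center_mem q⟩)
    rintro ⟨j, q⟩ ⟨j', q'⟩ hne
    by_cases hj : j = j'
    · subst hj
      obtain ⟨s, hs, hdist, hcode⟩ := (net j).separated q q' (fun h => hne (h ▸ rfl))
      refine ⟨s, hs.trans (Nat.lt_succ_self S), ?_, by rwa [Nat.dist_add_add_left]⟩
      convert hdist using 1
      field_simp
      ring
    · refine ⟨S, Nat.lt_succ_self S, ?_, le_two_mul_dist_mul_add (Fin.val_ne_of_ne hj)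
        ((net j).two_mul_code_le q) ((net j').two_mul_code_le q')⟩
      rw [mul_div_cancel_right₀ _ (by positivity), two_mul]
      exact (dist_triangle_right _ _ x).trans (add_le_add (hmem j q) (hmem j' q'))

lemma nonempty_codedNet {B K Q : ℕ} (hB : 0 < B) (hQ : 2 * K ≤ Q)
    (hsplit : ∀ (x : X) (r : ℝ), 0 ≤ r → ∃ c : Fin K → X,
      Metric.closedBall x r = ⋃ j, Metric.closedBall (c j) (r / B))
    (S : ℕ) (x : X) {r : ℝ} (hr : 0 ≤ r) : Nonempty (CodedNet B Q S x r) := by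
  induction S generalizing x r with
  | zero =>
    exact ⟨{
      Cell := Unit
      center := fun _ => x
      code := fun _ => 0
      center_mem := fun _ => Metric.mem_closedBall_self hr
      two_mul_code_le := fun _ => Nat.zero_le _
      exists_dist_le := fun y hy => ⟨(), by rwa [pow_zero, div_one]⟩
      separated := fun p p' hne => absurd rfl hne }⟩
  | succ S ih =>
    obtain ⟨c, hc⟩ := hsplit x r hr
    exact ⟨CodedNet.merge hB hQ hc fun j => (ih (c j) (div_nonneg hr B.cast_nonneg)).some⟩

/-- A net in the ball of radius `r` about `x` whose points have well-separated times between `L`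
and `horizon`. Each `y` in the ball has a net point at distance `δ / horizon ^ α`, while the points
with later times are at a distance that is controlled by the time to wait. -/
structure TimedNet (α θ δ : ℝ) (L : ℕ) (x : X) (r : ℝ) where
  Cell : Type
  center : Cell → X
  time : Cell → ℕ
  horizon : ℕ
  center_mem : ∀ p, center p ∈ Metric.closedBall x r
  le_time : ∀ p, L ≤ time p
  time_add_le : ∀ p, time p + L ≤ horizon
  separated : ∀ p p', p ≠ p' → L ≤ Nat.dist (time p) (time p')
  exists_close : ∀ y ∈ Metric.closedBall x r, ∃ p, dist y (center p) * (horizon : ℝ) ^ α ≤ δ ∧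
    ∀ p', time p < time p' →
      dist y (center p') * (horizon : ℝ) ^ α ≤ θ * ((time p' : ℝ) - time p) ^ α

lemma mul_rpow_le_mul_rpow_of_subdivision {α θ r : ℝ} {B Q S s : ℕ} (L : ℕ) (hB : 0 < B)
    (hQB : (Q : ℝ) ^ α ≤ B) (hr : 0 ≤ r) (hrθ : 3 * r * B * 4 ^ α ≤ θ) (hs : s ≤ S) :
    3 * r * (B : ℝ) ^ (s + 1) / (B : ℝ) ^ S * ((4 * L * Q ^ S : ℕ) : ℝ) ^ α ≤
      θ * (L * (Q : ℝ) ^ s) ^ α := by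
  obtain ⟨j, rfl⟩ := Nat.exists_eq_add_of_le hs
  have hB' : (0 : ℝ) < B := Nat.cast_pos.mpr hB
  have hratio : ((Q : ℝ) ^ α / B) ^ j ≤ 1 :=
    pow_le_one₀ (by positivity) (div_le_one_of_le₀ hQB hB'.le)
  have hsplit : ((4 * L * Q ^ (s + j) : ℕ) : ℝ) ^ α =
      4 ^ α * (L * (Q : ℝ) ^ s) ^ α * ((Q : ℝ) ^ α) ^ j := by
    rw [Real.rpow_pow_comm (by positivity), ← Real.mul_rpow (by positivity) (by positivity),
      ← Real.mul_rpow (by positivity) (by positivity)]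
    push_cast
    ring_nf
  calc 3 * r * (B : ℝ) ^ (s + 1) / (B : ℝ) ^ (s + j) * ((4 * L * Q ^ (s + j) : ℕ) : ℝ) ^ α
      = 3 * r * B * 4 ^ α * (L * (Q : ℝ) ^ s) ^ α * ((Q : ℝ) ^ α / B) ^ j := by
        rw [hsplit, pow_add, pow_add, div_pow]
        field_simp
    _ ≤ θ * (L * (Q : ℝ) ^ s) ^ α * 1 := by
        have : 0 ≤ θ := le_trans (by positivity) hrθ
        gcongr
    _ = θ * (L * (Q : ℝ) ^ s) ^ α := mul_one _

lemma dist_le_of_dist_le_div_pow {B S s : ℕ} {r : ℝ} {y p p' : X} (hB : 0 < B) (hr : 0 ≤ r)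
    (hy : dist y p ≤ r / (B : ℝ) ^ S)
    (hp : dist p p' ≤ 2 * r * (B : ℝ) ^ (s + 1) / (B : ℝ) ^ S) :
    dist y p' ≤ 3 * r * (B : ℝ) ^ (s + 1) / (B : ℝ) ^ S := by
  have hB1 : (1 : ℝ) ≤ B := Nat.one_le_cast.mpr hB
  calc dist y p' ≤ r / (B : ℝ) ^ S + 2 * r * (B : ℝ) ^ (s + 1) / (B : ℝ) ^ S :=
        (dist_triangle _ _ _).trans (add_le_add hy hp)
    _ ≤ r * (B : ℝ) ^ (s + 1) / (B : ℝ) ^ S + 2 * r * (B : ℝ) ^ (s + 1) / (B : ℝ) ^ S := by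
        gcongr
        exact le_mul_of_one_le_right hr (one_le_pow₀ hB1)
    _ = 3 * r * (B : ℝ) ^ (s + 1) / (B : ℝ) ^ S := by ring

lemma mul_add_two_mul_mul_add_le {q a b : ℕ} (L c : ℕ) (hab : a < b)
    (hq : q ≤ 2 * Nat.dist a b) : L * q + 2 * L * (c + a) ≤ 2 * L * (c + b) := by
  obtain ⟨t, rfl⟩ := Nat.exists_eq_add_of_le hab.le
  rw [Nat.dist_eq_sub_of_le hab.le, Nat.add_sub_cancel_left] at hq
  nlinarith

/-- The net with the same points whose times are the codes, scaled by `2 * L` and shifted. The scale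
turns the gaps `Q ^ s / 2` between codes into gaps `L * Q ^ s` between times. -/
def CodedNet.toTimedNet {α θ δ r : ℝ} {B Q S : ℕ} (L : ℕ) {x : X} (net : CodedNet B Q S x r)
    (hα : 0 ≤ α) (hB : 0 < B) (hQ : 0 < Q) (hQB : (Q : ℝ) ^ α ≤ B) (hr : 0 ≤ r)
    (hrθ : 3 * r * B * 4 ^ α ≤ θ) (hS : r / (B : ℝ) ^ S * ((4 * L * Q ^ S : ℕ) : ℝ) ^ α ≤ δ) :
    TimedNet α θ δ L x r where
  Cell := net.Cell
  center := net.center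
  time p := 2 * L * (Q ^ S + net.code p)
  horizon := 4 * L * Q ^ S
  center_mem := net.center_mem
  le_time p := by
    have := pow_pos hQ S
    nlinarith
  time_add_le p := by
    have := net.two_mul_code_le p
    have := pow_pos hQ S
    nlinarith
  separated p p' hne := by
    obtain ⟨s, -, -, hcode⟩ := net.separated p p' hne
    have := pow_pos hQ s
    rw [Nat.dist_mul_left, Nat.dist_add_add_left]
    nlinarith
  exists_close y hy := by
    obtain ⟨p, hp⟩ := net.exists_dist_le y hy
    refine ⟨p, le_trans (by gcongr) hS, fun p' hlt => ?_⟩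
    obtain ⟨s, hs, hdist, hcode⟩ := net.separated p p' (fun h => hlt.ne (h ▸ rfl))
    have hyp' := dist_le_of_dist_le_div_pow hB hr hp hdist
    have hcodelt : net.code p < net.code p' := by
      simpa only [add_lt_add_iff_left] using Nat.lt_of_mul_lt_mul_left hlt
    have hwait : L * (Q : ℝ) ^ s ≤
        ((2 * L * (Q ^ S + net.code p') : ℕ) : ℝ) - (2 * L * (Q ^ S + net.code p) : ℕ) :=
      le_sub_iff_add_le.mpr (mod_cast mul_add_two_mul_mul_add_le L (Q ^ S) hcodelt hcode)
    refine le_trans (by gcongr)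
      ((mul_rpow_le_mul_rpow_of_subdivision L hB hQB hr hrθ hs.le).trans ?_)
    have : 0 ≤ θ := le_trans (by positivity) hrθ
    gcongr

end Nets

section EuclideanNets

lemma exists_closedBall_eq_iUnion_closedBall_real {B : ℕ} (hB : 0 < B) (x r : ℝ) (hr : 0 ≤ r) :
    ∃ c : Fin B → ℝ, Metric.closedBall x r = ⋃ j, Metric.closedBall (c j) (r / B) := by
  have hB' : (0 : ℝ) < B := Nat.cast_pos.mpr hB
  have hrB : B * (r / B) = r := mul_div_cancel₀ r hB'.ne'
  have : 0 ≤ r / B := by positivity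
  have hcell (t : ℝ) (j : ℕ) : t ∈ Metric.closedBall (x - r + (2 * j + 1) * (r / B)) (r / B) ↔
      x - r + 2 * j * (r / B) ≤ t ∧ t ≤ x - r + 2 * (j + 1) * (r / B) := by
    rw [Real.closedBall_eq_Icc, Set.mem_Icc]
    constructor <;> rintro ⟨h₁, h₂⟩ <;> constructor <;> linarith
  refine ⟨fun j => x - r + (2 * (j : ℕ) + 1) * (r / B), Set.ext fun t => ?_⟩
  rw [Set.mem_iUnion, Real.closedBall_eq_Icc, Set.mem_Icc]
  simp only [hcell]
  constructor
  · rintro ⟨h₁, h₂⟩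
    have hlast : t ≤ x - r + 2 * ((B - 1 : ℕ) + 1) * (r / B) := by
      rw [Nat.cast_pred hB]
      linarith
    have hex : ∃ j : ℕ, t ≤ x - r + 2 * (j + 1) * (r / B) := ⟨B - 1, hlast⟩
    classical
    refine ⟨⟨Nat.find hex, (Nat.find_min' hex hlast).trans_lt (by lia)⟩, ?_, Nat.find_spec hex⟩
    change x - r + 2 * (Nat.find hex : ℝ) * (r / B) ≤ t
    rcases hj : Nat.find hex with _ | j
    · simpa using h₁
    · push_cast
      exact (not_le.mp (Nat.find_min hex (hj ▸ Nat.lt_succ_self j))).le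
  · rintro ⟨j, h₁, h₂⟩
    have hj : ((j : ℕ) : ℝ) + 1 ≤ B := mod_cast j.isLt
    constructor
    · exact (le_add_of_nonneg_right (by positivity)).trans h₁
    · nlinarith

lemma exists_closedBall_eq_iUnion_closedBall {B : ℕ} (hB : 0 < B) (d : ℕ) (x : Fin d → ℝ) (r : ℝ)
    (hr : 0 ≤ r) : ∃ c : Fin (B ^ d) → Fin d → ℝ,
      Metric.closedBall x r = ⋃ j, Metric.closedBall (c j) (r / B) := by
  choose c hc using fun i => exists_closedBall_eq_iUnion_closedBall_real hB (x i) r hr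
  refine ⟨fun j i => c i (finFunctionFinEquiv.symm j i), ?_⟩
  rw [finFunctionFinEquiv.symm.surjective.iUnion_comp
    (fun v => Metric.closedBall (fun i => c i (v i)) (r / B))]
  simp only [closedBall_pi _ hr, closedBall_pi _ (div_nonneg hr (Nat.cast_nonneg B)), hc]
  exact (Set.iUnion_univ_pi _).symm

lemma exists_pow_rpow_lt {d : ℕ} {α : ℝ} (hα : d * α < 1) :
    ∃ B Q : ℕ, 0 < B ∧ 2 * B ^ d ≤ Q ∧ (Q : ℝ) ^ α < B := by
  have hgrow : Tendsto (fun B : ℕ => (B : ℝ) ^ (1 - d * α)) atTop atTop :=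
    (tendsto_rpow_atTop (sub_pos.mpr hα)).comp tendsto_natCast_atTop_atTop
  obtain ⟨B, h2B, hB⟩ := ((hgrow.eventually_gt_atTop (2 ^ α)).and (eventually_gt_atTop 0)).exists
  have hB' : (0 : ℝ) < B := Nat.cast_pos.mpr hB
  refine ⟨B, 2 * B ^ d, hB, le_rfl, ?_⟩
  push_cast
  calc (2 * (B : ℝ) ^ d) ^ α = 2 ^ α * (B : ℝ) ^ (d * α) := by
        rw [Real.mul_rpow (by positivity) (by positivity), ← Real.rpow_natCast_mul hB'.le]
    _ < (B : ℝ) ^ (1 - d * α) * (B : ℝ) ^ (d * α) := by gcongr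
    _ = B := by rw [← Real.rpow_add hB', sub_add_cancel, Real.rpow_one]

theorem exists_forall_nonempty_timedNet {d : ℕ} {α θ : ℝ} (hα0 : 0 ≤ α) (hα : d * α < 1)
    (hθ : 0 < θ) : ∃ r₀ > 0, ∀ r, 0 ≤ r → r ≤ r₀ → ∀ (x : Fin d → ℝ) (L : ℕ) (δ : ℝ), 0 < δ →
      Nonempty (TimedNet α θ δ L x r) := by
  obtain ⟨B, Q, hB, hQ, hQB⟩ := exists_pow_rpow_lt hα
  have hB' : (0 : ℝ) < B := Nat.cast_pos.mpr hB
  have hQ0 : 0 < Q := lt_of_lt_of_le (by positivity) hQ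
  refine ⟨θ / (3 * B * 4 ^ α), by positivity, fun r hr hrr₀ x L δ hδ => ?_⟩
  have hmesh : Tendsto (fun S : ℕ => r / (B : ℝ) ^ S * ((4 * L * Q ^ S : ℕ) : ℝ) ^ α) atTop
      (𝓝 0) := by
    have hpow := (tendsto_pow_atTop_nhds_zero_of_lt_one (by positivity)
      ((div_lt_one hB').mpr hQB)).const_mul (r * (4 * L : ℝ) ^ α)
    rw [mul_zero] at hpow
    refine hpow.congr fun S => ?_
    push_cast
    rw [Real.mul_rpow (x := 4 * (L : ℝ)) (by positivity) (by positivity),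
      ← Real.rpow_pow_comm (by positivity), div_pow]
    ring
  obtain ⟨S, hS⟩ := (hmesh.eventually_le_const hδ).exists
  obtain ⟨net⟩ :=
    nonempty_codedNet hB hQ (exists_closedBall_eq_iUnion_closedBall hB d) S x hr
  refine ⟨net.toTimedNet L hα0 hB hQ0 hQB.le hr ?_ hS⟩
  rw [le_div_iff₀ (by positivity)] at hrr₀
  linarith

end EuclideanNets

section Blocks

lemma apply_mem_closedBall {ι : Type*} [Fintype ι] {E : ι → Type*}
    [∀ i, PseudoMetricSpace (E i)] {u v : ∀ i, E i} {r : ℝ} (h : v ∈ Metric.closedBall u r)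
    (i : ι) : v i ∈ Metric.closedBall (u i) r :=
  (dist_le_pi_dist v u i).trans h

variable {d : ℕ} {α θ δ r A : ℝ} {L M : ℕ} {x lam : Fin d → ℝ} {w : ℝ → ℕ → ℝ}

lemma TimedNet.injective_add_time (net : TimedNet α θ δ L x r) (hM : M ≤ L) :
    Function.Injective fun q : net.Cell × Fin M => (q.2 : ℕ) + net.time q.1 := by
  rintro ⟨p, m⟩ ⟨p', m'⟩ h
  have := m.isLt
  have := m'.isLt
  obtain rfl : p = p' := by
    by_contra hne
    have := net.separated p p' hne
    rw [Nat.dist] at this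
    lia
  rw [Prod.mk.injEq]
  exact ⟨rfl, Fin.ext (Nat.add_right_cancel h)⟩

/-- The vector carrying, for each point `p` of the net, a block of `M` entries starting at the
position `net.time p`. The `(k + 1)`-st powers of the entries of that block are moved to
the first `M` entries of `y` by `net.time p` applications of the weighted shifts with the parameters
`net.center p`. -/
def TimedNet.blocks (net : TimedNet α θ δ L x r) (w : ℝ → ℕ → ℝ) (k M : ℕ) (y : Fin d → c0C) :
    Fin d → c0C :=
  fun i => truncC0 (Function.extend (fun q : net.Cell × Fin M => (q.2 : ℕ) + net.time q.1)
    (fun q => (y i q.2 / weightProd (w (net.center q.1 i)) q.2 (net.time q.1)) ^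
      (((k + 1 : ℕ) : ℂ)⁻¹)) 0) net.horizon

namespace TimedNet

variable (net : TimedNet α θ δ L x r) (w) (k : ℕ) (y : Fin d → c0C)

lemma blocks_add_time_pow (hM : M ≤ L) (i : Fin d) (p : net.Cell) {m : ℕ} (hm : m < M) :
    net.blocks w k M y i (m + net.time p) ^ (k + 1) =
      y i m / weightProd (w (net.center p i)) m (net.time p) := by
  have hlt : m + net.time p < net.horizon := by
    have := net.time_add_le p
    lia
  rw [blocks, truncC0_apply, if_pos hlt,
    (net.injective_add_time hM).extend_apply _ _ ((p, ⟨m, hm⟩) : net.Cell × Fin M),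
    Complex.cpow_nat_inv_pow _ k.succ_ne_zero]

lemma blocks_eq_zero_or (M) (i : Fin d) (n : ℕ) :
    net.blocks w k M y i n = 0 ∨ ∃ p, ∃ m < M, n = m + net.time p := by
  by_cases h : ∃ q : net.Cell × Fin M, (q.2 : ℕ) + net.time q.1 = n
  · obtain ⟨⟨p, m⟩, h⟩ := h
    exact Or.inr ⟨p, m, m.isLt, h.symm⟩
  · rw [blocks, truncC0_apply, Function.extend_apply' _ _ _ h, Pi.zero_apply, ite_self]
    exact Or.inl rfl

lemma blocks_eq_zero_of_lt (i : Fin d) {n : ℕ} (hn : n < L) : net.blocks w k M y i n = 0 := by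
  refine (net.blocks_eq_zero_or w k y M i n).resolve_right ?_
  rintro ⟨p, m, -, rfl⟩
  have := net.le_time p
  lia

end TimedNet

variable (net : TimedNet α θ δ L x r)

lemma TimedNet.norm_blocks_pow_le (hα : 0 ≤ α) (hM : M ≤ L)
    (hw : ∀ i, IsStretchedExpWeight α A w (Metric.closedBall (x i) r)) (k : ℕ)
    (y : Fin d → c0C) (i : Fin d) (n : ℕ) :
    ‖net.blocks w k M y i n‖ ^ (k + 1) ≤ ‖y‖ * (A ^ M * Real.exp (-((L : ℝ) ^ α / (2 * A)))) := by
  have hA : 0 < A := one_pos.trans_le (hw i).one_le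
  rcases net.blocks_eq_zero_or w k y M i n with h | ⟨p, m, hm, rfl⟩
  · rw [h, norm_zero, zero_pow k.succ_ne_zero]
    positivity
  have hp := apply_mem_closedBall (net.center_mem p) i
  have hW := weightProd_pos ((hw i).pos _ hp) m (net.time p)
  rw [← norm_pow, net.blocks_add_time_pow w k y hM i p hm, norm_div, Complex.norm_real,
    Real.norm_of_nonneg hW.le, div_eq_mul_inv]
  exact mul_le_mul (norm_apply_apply_le y i m)
    ((hw i).inv_weightProd_le hα hp (net.le_time p) hm.le) (inv_nonneg.mpr hW.le) (norm_nonneg y)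

lemma TimedNet.norm_own_block_sub_le (hα : 0 ≤ α) (hM : M ≤ L)
    (hw : ∀ i, IsStretchedExpWeight α A w (Metric.closedBall (x i) r)) (k : ℕ) (y : Fin d → c0C)
    (hlam : lam ∈ Metric.closedBall x r) {p : net.Cell}
    (hp : dist lam (net.center p) * (net.horizon : ℝ) ^ α ≤ δ) (i : Fin d) {m : ℕ} (hm : m < M) :
    ‖(weightProd (w (lam i)) m (net.time p) : ℂ) *
        net.blocks w k M y i (m + net.time p) ^ (k + 1) - y i m‖ ≤
      ‖y‖ * (Real.exp (A * δ) - 1) := by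
  have hA : 0 < A := one_pos.trans_le (hw i).one_le
  have hle : ((m + net.time p : ℕ) : ℝ) ≤ net.horizon := by
    have := net.time_add_le p
    exact_mod_cast (by lia : m + net.time p ≤ net.horizon)
  have hdist : A * |lam i - net.center p i| * ((m + net.time p : ℕ) : ℝ) ^ α ≤ A * δ := by
    rw [mul_assoc]
    gcongr
    refine le_trans ?_ hp
    gcongr
    exact dist_le_pi_dist lam (net.center p) i
  have hratio := (hw i).abs_weightProd_div_sub_one_le (apply_mem_closedBall hlam i)
    (apply_mem_closedBall (net.center_mem p) i) hdist
  rw [net.blocks_add_time_pow w k y hM i p hm, mul_div_left_comm, ← mul_sub_one, norm_mul]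
  refine mul_le_mul (norm_apply_apply_le y i m) ?_ (norm_nonneg _) (norm_nonneg y)
  rwa [← Complex.ofReal_div, ← Complex.ofReal_one, ← Complex.ofReal_sub, Complex.norm_real]

lemma TimedNet.norm_later_block_le (hα : 0 ≤ α) (hM : M ≤ L)
    (hw : ∀ i, IsStretchedExpWeight α A w (Metric.closedBall (x i) r)) (k : ℕ) (y : Fin d → c0C)
    (hlam : lam ∈ Metric.closedBall x r) {N : ℕ} {p : net.Cell} (hp : N + L ≤ net.time p)
    (hdist : dist lam (net.center p) * (net.horizon : ℝ) ^ α ≤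
      1 / (2 * A ^ 2) * ((net.time p : ℝ) - N) ^ α) (i : Fin d) {g m : ℕ} (hm : m < M)
    (hg : g + N = m + net.time p) :
    ‖(weightProd (w (lam i)) g N : ℂ) * net.blocks w k M y i (g + N) ^ (k + 1)‖ ≤
      ‖y‖ * (A ^ M * Real.exp (-((L : ℝ) ^ α / (2 * A)))) := by
  have hA : 0 < A := one_pos.trans_le (hw i).one_le
  have hp' := apply_mem_closedBall (net.center_mem p) i
  have hlam' := apply_mem_closedBall hlam i
  have hle : ((m + net.time p : ℕ) : ℝ) ≤ net.horizon := by
    have := net.time_add_le p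
    exact_mod_cast (by lia : m + net.time p ≤ net.horizon)
  have hwait : (0 : ℝ) ≤ (net.time p : ℝ) - N :=
    sub_nonneg.mpr (Nat.cast_le.mpr ((Nat.le_add_right N L).trans hp))
  have hgap : (net.time p : ℝ) - N ≤ g :=
    sub_le_iff_le_add.mpr (mod_cast (by lia : net.time p ≤ g + N))
  have hfar : |lam i - net.center p i| * ((m + net.time p : ℕ) : ℝ) ^ α ≤
      1 / (2 * A ^ 2) * (g : ℝ) ^ α := by
    calc |lam i - net.center p i| * ((m + net.time p : ℕ) : ℝ) ^ α
        ≤ dist lam (net.center p) * (net.horizon : ℝ) ^ α := by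
          gcongr
          exact dist_le_pi_dist lam (net.center p) i
      _ ≤ 1 / (2 * A ^ 2) * ((net.time p : ℝ) - N) ^ α := hdist
      _ ≤ 1 / (2 * A ^ 2) * (g : ℝ) ^ α := by gcongr
  have hWa := weightProd_pos ((hw i).pos _ hlam') g N
  have hWb := weightProd_pos ((hw i).pos _ hp') m (net.time p)
  rw [hg, net.blocks_add_time_pow w k y hM i p hm, mul_div_left_comm, norm_mul,
    ← Complex.ofReal_div, Complex.norm_real, Real.norm_of_nonneg (div_pos hWa hWb).le]
  exact mul_le_mul (norm_apply_apply_le y i m) ((hw i).weightProd_div_weightProd_le_of_far hα hlam'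
    hp' hg (by lia) hm.le hfar) (div_pos hWa hWb).le (norm_nonneg y)

lemma TimedNet.exists_forall_norm_sub_le (net : TimedNet α (1 / (2 * A ^ 2)) δ L x r)
    (hα : 0 ≤ α) (hM : M ≤ L)
    (hw : ∀ i, IsStretchedExpWeight α A w (Metric.closedBall (x i) r)) (k : ℕ)
    {y : Fin d → c0C} (hy : ∀ i m, M ≤ m → y i m = 0) {ε : ℝ}
    (hδ : ‖y‖ * (Real.exp (A * δ) - 1) ≤ ε)
    (hL : ‖y‖ * (A ^ M * Real.exp (-((L : ℝ) ^ α / (2 * A)))) ≤ ε)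
    (hlam : lam ∈ Metric.closedBall x r) :
    ∃ N, L ≤ N ∧ N ≤ net.horizon ∧ ∀ i m, ‖(weightProd (w (lam i)) m N : ℂ) *
      net.blocks w k M y i (m + N) ^ (k + 1) - y i m‖ ≤ ε := by
  obtain ⟨p, hp, hlater⟩ := net.exists_close lam hlam
  refine ⟨net.time p, net.le_time p, (Nat.le_add_right _ L).trans (net.time_add_le p),
    fun i m => ?_⟩
  rcases lt_or_ge m M with hm | hm
  · exact (net.norm_own_block_sub_le hα hM hw k y hlam hp i hm).trans hδ
  rw [hy i m hm, sub_zero]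
  refine le_trans ?_ hL
  rcases net.blocks_eq_zero_or w k y M i (m + net.time p) with h | ⟨p', m', hm', h⟩
  · have hA : 0 < A := one_pos.trans_le (hw i).one_le
    rw [h, zero_pow k.succ_ne_zero, mul_zero, norm_zero]
    positivity
  · have hlt : net.time p < net.time p' := by lia
    have hwait := net.separated p p' (fun hpp' => hlt.ne (hpp' ▸ rfl))
    rw [Nat.dist_eq_sub_of_le hlt.le] at hwait
    exact net.norm_later_block_le hα hM hw k y hlam (by lia) (hlater p' hlt) i hm' h

end Blocks

section LocalResiduality

variable {d : ℕ} {α r A : ℝ} {x : Fin d → ℝ} {w : ℝ → ℕ → ℝ}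
  {T : (Fin d → ℝ) → ((Fin d → c0C) →L[ℂ] (Fin d → c0C))} {V : Set (Fin d → ℝ)}

lemma tendsto_mul_exp_neg_rpow_div {α c : ℝ} (hα : 0 < α) (hc : 0 < c) (C : ℝ) :
    Tendsto (fun L : ℕ => C * Real.exp (-((L : ℝ) ^ α / c))) atTop (𝓝 0) := by
  have hpow := ((tendsto_rpow_atTop hα).comp tendsto_natCast_atTop_atTop).atTop_div_const hc
  simpa using (Real.tendsto_exp_neg_atTop_nhds_zero.comp hpow).const_mul C

lemma exists_pos_mul_exp_sub_one_le (A C : ℝ) {ε : ℝ} (hε : 0 < ε) :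
    ∃ δ > 0, C * (Real.exp (A * δ) - 1) ≤ ε := by
  have hcont : Continuous fun δ : ℝ => C * (Real.exp (A * δ) - 1) := by fun_prop
  have hzero : C * (Real.exp (A * 0) - 1) < ε := by simpa
  obtain ⟨δ, hδε, hδ⟩ := (((hcont.continuousAt.tendsto.eventually_le_const hzero).filter_mono
    (nhdsWithin_le_nhds (s := Set.Ioi 0))).and self_mem_nhdsWithin).exists
  exact ⟨δ, hδ, hδε⟩

/-- The vector `z` keeps the first `L` entries of `z₀` and continues with the blocks of a net whose
times are at least `L`. -/
lemma exists_dist_le_forall_dist_pow_mulAeval_le (hα : 0 < α) (hA : 0 < A)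
    (hw : ∀ i, IsStretchedExpWeight α A w (Metric.closedBall (x i) r))
    (hnet : ∀ (L : ℕ) (δ : ℝ), 0 < δ → Nonempty (TimedNet α (1 / (2 * A ^ 2)) δ L x r))
    (hV : V ⊆ Metric.closedBall x r) (hT : ∀ lam ∈ V, IsProductShiftC0 d w (T lam) lam)
    (k n : ℕ) {y : Fin d → c0C} {M : ℕ} (hy : ∀ i m, M ≤ m → y i m = 0)
    (z₀ : Fin d → c0C) {ρ ε : ℝ} (hρ : 0 < ρ) (hε : 0 < ε) :
    ∃ z, dist z z₀ ≤ ρ ∧ ∃ N₁, ∀ lam ∈ V, ∃ N, n ≤ N ∧ N ≤ N₁ ∧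
      dist ((T lam ^ N) (mulAeval z (Polynomial.X ^ k : ℂ[X]))) y ≤ ε := by
  have hρ2 := half_pos hρ
  have hexp := tendsto_mul_exp_neg_rpow_div hα (by positivity : 0 < 2 * A) (‖y‖ * A ^ M)
  obtain ⟨L, hLε, hLρ, hz₀, hML, hnL⟩ := ((hexp.eventually_le_const hε).and <|
    (hexp.eventually_le_const (pow_pos hρ2 (k + 1))).and <|
    (eventually_forall_ge_atTop.mpr (eventually_forall_norm_lt z₀ hρ2)).and <|
    (eventually_ge_atTop M).and (eventually_ge_atTop n)).exists
  rw [mul_assoc] at hLε hLρ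
  obtain ⟨δ, hδ, hδε⟩ := exists_pos_mul_exp_sub_one_le A ‖y‖ hε
  obtain ⟨net⟩ := hnet L δ hδ
  let u := net.blocks w k M y
  have hu (i n) : ‖u i n‖ ≤ ρ / 2 := le_of_pow_le_pow_left₀ k.succ_ne_zero hρ2.le
    ((net.norm_blocks_pow_le hα.le hML hw k y i n).trans hLρ)
  have hz (i : Fin d) (m : ℕ) : (truncC0 (z₀ i) L + u i) m = if m < L then z₀ i m else u i m := by
    rw [ZeroAtInftyContinuousMap.add_apply, truncC0_apply]
    split_ifs with hm
    · rw [net.blocks_eq_zero_of_lt w k y i hm, add_zero]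
    · rw [zero_add]
  refine ⟨fun i => truncC0 (z₀ i) L + u i, (dist_pi_zeroAtInfty_le_iff hρ.le).mpr fun i m => ?_,
    net.horizon, fun lam hlam => ?_⟩
  · rw [hz]
    split_ifs with hm
    · rw [dist_self]
      exact hρ.le
    · rw [dist_eq_norm]
      linarith [norm_sub_le (u i m) (z₀ i m), hu i m, hz₀ m (not_lt.mp hm) i]
  · obtain ⟨N, hLN, hN, happrox⟩ :=
      net.exists_forall_norm_sub_le hα.le hML hw k hy hδε hLε (hV hlam)
    refine ⟨N, hnL.trans hLN, hN, (dist_pi_zeroAtInfty_le_iff hε.le).mpr fun i m => ?_⟩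
    rw [(hT lam hlam).pow_apply, mulAeval_X_pow_apply, hz, if_neg (by lia), dist_eq_norm]
    exact happrox i m

lemma eventually_forall_dist_pow_mulAeval_lt (hA : 1 ≤ A)
    (hw : ∀ i, IsStretchedExpWeight α A w (Metric.closedBall (x i) r))
    (hV : V ⊆ Metric.closedBall x r) (hT : ∀ lam ∈ V, IsProductShiftC0 d w (T lam) lam)
    (k N₁ : ℕ) (z : Fin d → c0C) {ε : ℝ} (hε : 0 < ε) :
    ∀ᶠ v in 𝓝 z, ∀ lam ∈ V, ∀ N ≤ N₁, dist ((T lam ^ N) (mulAeval v (Polynomial.X ^ k : ℂ[X])))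
      ((T lam ^ N) (mulAeval z (Polynomial.X ^ k : ℂ[X]))) < ε := by
  have hcont : Continuous fun v : Fin d → c0C => A ^ N₁ *
      dist (mulAeval v (Polynomial.X ^ k : ℂ[X])) (mulAeval z (Polynomial.X ^ k : ℂ[X])) :=
    ((continuous_mulAeval_X_pow k).dist continuous_const).const_mul _
  have hzero : A ^ N₁ * dist (mulAeval z (Polynomial.X ^ k : ℂ[X]))
      (mulAeval z (Polynomial.X ^ k : ℂ[X])) < ε := by rwa [dist_self, mul_zero]
  filter_upwards [hcont.continuousAt.tendsto.eventually_lt_const hzero] with v hv lam hlam N hN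
  have hmem (i) := apply_mem_closedBall (hV hlam) i
  calc
    _ ≤ A ^ N * dist (mulAeval v (Polynomial.X ^ k : ℂ[X]))
          (mulAeval z (Polynomial.X ^ k : ℂ[X])) :=
        (hT lam hlam).dist_pow_apply_le (by positivity) (fun i n => ((hw i).pos _ (hmem i) n).le)
          (fun i => (hw i).le _ (hmem i)) N _ _
    _ ≤ A ^ N₁ * dist (mulAeval v (Polynomial.X ^ k : ℂ[X]))
          (mulAeval z (Polynomial.X ^ k : ℂ[X])) := by gcongr
    _ < ε := hv

lemma eventually_residual_forall_exists_dist_lt (hα : 0 < α) (hA : 1 ≤ A)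
    (hw : ∀ i, IsStretchedExpWeight α A w (Metric.closedBall (x i) r))
    (hnet : ∀ (L : ℕ) (δ : ℝ), 0 < δ → Nonempty (TimedNet α (1 / (2 * A ^ 2)) δ L x r))
    (hV : V ⊆ Metric.closedBall x r) (hT : ∀ lam ∈ V, IsProductShiftC0 d w (T lam) lam)
    (k n : ℕ) {y : Fin d → c0C} {M : ℕ} (hy : ∀ i m, M ≤ m → y i m = 0) {ε : ℝ} (hε : 0 < ε) :
    ∀ᶠ v in residual (Fin d → c0C), ∀ lam ∈ V, ∃ N ≥ n,
      dist ((T lam ^ N) (mulAeval v (Polynomial.X ^ k : ℂ[X]))) y < ε := by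
  refine Filter.mem_of_superset (residual_of_dense_open isOpen_interior ?_) interior_subset
  refine Metric.dense_iff.mpr fun z₀ ρ hρ => ?_
  obtain ⟨z, hz, N₁, hN₁⟩ := exists_dist_le_forall_dist_pow_mulAeval_le hα (one_pos.trans_le hA) hw
    hnet hV hT k n hy z₀ (half_pos hρ) (half_pos hε)
  refine ⟨z, hz.trans_lt (half_lt_self hρ), mem_interior_iff_mem_nhds.mpr ?_⟩
  filter_upwards [eventually_forall_dist_pow_mulAeval_lt hA hw hV hT k N₁ z (half_pos hε)]
    with v hv lam hlam
  obtain ⟨N, hnN, hNN₁, happrox⟩ := hN₁ lam hlam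
  exact ⟨N, hnN, (dist_triangle _ _ _).trans_lt
    ((add_lt_add_of_lt_of_le (hv lam hlam N hNN₁) happrox).trans_eq (add_halves ε))⟩

end LocalResiduality

section CommonHypercyclicAlgebras

variable {d : ℕ} {α : ℝ} {w : ℝ → ℕ → ℝ}
  {T : (Fin d → ℝ) → ((Fin d → c0C) →L[ℂ] (Fin d → c0C))}

lemma exists_isStretchedExpWeight_closedBall {lam₀ : Fin d → ℝ}
    (hw : ∀ i, ∃ A, ∃ I ∈ 𝓝 (lam₀ i), IsStretchedExpWeight α A w I) :
    ∃ A ≥ 1, ∃ R > 0, ∀ i, IsStretchedExpWeight α A w (Metric.closedBall (lam₀ i) R) := by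
  choose A I hI hw using hw
  obtain ⟨A', hA'⟩ := (Set.finite_range A).bddAbove
  have hball : ∀ᶠ R in 𝓝[>] (0 : ℝ), ∀ i, Metric.closedBall (lam₀ i) R ⊆ I i :=
    eventually_all.mpr fun i => nhdsWithin_le_nhds (eventually_closedBall_subset (hI i))
  obtain ⟨R, hR, hR0⟩ := (hball.and self_mem_nhdsWithin).exists
  refine ⟨max 1 A', le_max_left 1 A', R, hR0, fun i => (hw i).mono ?_ (hR i)⟩
  exact (hA' (Set.mem_range_self i)).trans (le_max_right 1 A')

lemma exists_mem_nhds_eventually_forall_exists_dist_lt (hα0 : 0 < α) (hα1 : d * α < 1)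
    {S : Set (Fin d → ℝ)} (hT : ∀ lam ∈ S, IsProductShiftC0 d w (T lam) lam) {lam₀ : Fin d → ℝ}
    (hw : ∀ i, ∃ A, ∃ I ∈ 𝓝 (lam₀ i), IsStretchedExpWeight α A w I) :
    ∃ V ∈ 𝓝[S] lam₀, ∀ k n : ℕ, ∀ y : Fin d → c0C, (∃ M, ∀ i m, M ≤ m → y i m = 0) → ∀ ε > 0,
      ∀ᶠ v in residual (Fin d → c0C), ∀ lam ∈ V, ∃ N ≥ n,
        dist ((T lam ^ N) (mulAeval v (Polynomial.X ^ k : ℂ[X]))) y < ε := by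
  obtain ⟨A, hA, R, hR, hwR⟩ := exists_isStretchedExpWeight_closedBall hw
  have hθ : 0 < 1 / (2 * A ^ 2) := by positivity
  obtain ⟨r₀, hr₀, hnet⟩ := exists_forall_nonempty_timedNet hα0.le hα1 hθ
  have hr : 0 < min R r₀ := lt_min hR hr₀
  refine ⟨Metric.closedBall lam₀ (min R r₀) ∩ S, ?_, fun k n y ⟨M, hy⟩ ε hε => ?_⟩
  · exact inter_mem (mem_nhdsWithin_of_mem_nhds (Metric.closedBall_mem_nhds lam₀ hr))
      self_mem_nhdsWithin
  · exact eventually_residual_forall_exists_dist_lt hα0 hA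
      (fun i => (hwR i).mono le_rfl (Metric.closedBall_subset_closedBall (min_le_left R r₀)))
      (hnet _ hr.le (min_le_right R r₀) lam₀) Set.inter_subset_left
      (fun lam hlam => hT lam hlam.2) k n hy hε

theorem eventually_residual_forall_isPowerUniversal (hα0 : 0 < α) (hα1 : d * α < 1)
    {S : Set (Fin d → ℝ)} (hT : ∀ lam ∈ S, IsProductShiftC0 d w (T lam) lam)
    (hw : ∀ lam ∈ S, ∀ i, ∃ A, ∃ I ∈ 𝓝 (lam i), IsStretchedExpWeight α A w I) :
    ∀ᶠ x in residual (Fin d → c0C), ∀ lam ∈ S, IsPowerUniversal (T lam) x := by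
  obtain ⟨D, hDfin, hDcount, hD⟩ :=
    (dense_setOf_finite_support (Fin d)).exists_countable_dense_subset
  have happrox : ∀ᶠ x in residual (Fin d → c0C), ∀ k, ∀ y ∈ D, ∀ n : ℕ, ∀ lam ∈ S, ∃ N ≥ n,
      dist ((T lam ^ N) (mulAeval x (Polynomial.X ^ k : ℂ[X]))) y < 1 / (n + 1) := by
    refine eventually_countable_forall.mpr fun k => (eventually_countable_ball hDcount).mpr
      fun y hy => eventually_countable_forall.mpr fun n =>
      eventually_forall_mem_of_forall_exists_nhdsWithin fun lam₀ hlam₀ => ?_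
    obtain ⟨V, hV, hres⟩ :=
      exists_mem_nhds_eventually_forall_exists_dist_lt hα0 hα1 hT (hw lam₀ hlam₀)
    exact ⟨V, hV, hres k n y (hDfin hy) _ (by positivity)⟩
  filter_upwards [happrox] with x hx lam hlam
  exact isPowerUniversal_of_dense hD fun k y hy n => hx k y hy n lam hlam

lemma commonHypercyclicAlgebraCWC0_of_isPowerUniversal {S : Set (Fin d → ℝ)}
    (hT : ∀ lam ∈ S, IsProductShiftC0 d w (T lam) lam) {x : Fin d → c0C} (hx0 : x ≠ 0)
    (hx : ∀ lam ∈ S, IsPowerUniversal (T lam) x) : CommonHypercyclicAlgebraCWC0 d S T := by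
  refine ⟨Set.range (mulAeval x : ℂ[X] →ₗ[ℂ] Fin d → c0C), ⟨0, map_zero _⟩, ?_, ?_, ?_,
    ⟨x, ⟨1, mulAeval_one x⟩, hx0⟩, ?_⟩
  · rintro _ ⟨p, rfl⟩ _ ⟨q, rfl⟩
    exact ⟨p + q, map_add _ p q⟩
  · rintro c _ ⟨p, rfl⟩
    exact ⟨c • p, map_smul _ c p⟩
  · rintro _ ⟨p, rfl⟩ _ ⟨q, rfl⟩
    refine ⟨_, ⟨p * (Polynomial.X * q), rfl⟩, fun i n => ?_⟩
    rw [← mulAeval_mul_mulAeval]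
    rfl
  · rintro _ ⟨p, rfl⟩ hpx lam hlam
    exact (hx lam hlam).dense_range_pow_mulAeval (hT lam hlam).exists_tendsto_zero_pow_mul
      (ne_zero_of_map hpx)

theorem stmt_12_general (d : ℕ) (hd : 1 ≤ d) (α : ℝ) (hα0 : 0 < α) (hα1 : α < 1 / (d : ℝ))
    (w : ℝ → ℕ → ℝ) (S : Set (Fin d → ℝ))
    (hw : ∀ lam ∈ S, ∀ i, ∃ A, ∃ I ∈ 𝓝 (lam i), IsStretchedExpWeight α A w I)
    (T : (Fin d → ℝ) → ((Fin d → c0C) →L[ℂ] (Fin d → c0C)))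
    (hT : ∀ lam ∈ S, IsProductShiftC0 d w (T lam) lam) :
    CommonHypercyclicAlgebraCWC0 d S T := by
  have : Nonempty (Fin d) := ⟨⟨0, hd⟩⟩
  have : Nontrivial c0C :=
    ⟨truncC0 1 1, 0, fun h => by simpa [truncC0_apply] using DFunLike.congr_fun h 0⟩
  have : (𝓝[≠] (0 : Fin d → c0C)).NeBot := Module.punctured_nhds_neBot ℂ _ 0
  have hd0 : (0 : ℝ) < d := Nat.cast_pos.mpr hd
  have hne : ∀ᶠ x in residual (Fin d → c0C), x ≠ 0 :=
    residual_of_dense_open isOpen_compl_singleton (dense_compl_singleton 0)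
  have hres := eventually_residual_forall_isPowerUniversal hα0 ((lt_div_iff₀' hd0).mp hα1) hT hw
  obtain ⟨x, hx, hx0⟩ := (dense_of_mem_residual (hres.and hne)).nonempty
  exact commonHypercyclicAlgebraCWC0_of_isPowerUniversal hT hx0 hx

end CommonHypercyclicAlgebras

section OneAddMul

lemma exp_div_one_add_mul_le {a b c t : ℝ} (ha : 0 < a) (hac : a ≤ c) (hcb : c ≤ b) (ht0 : 0 ≤ t)
    (ht1 : t ≤ 1) : Real.exp (a / (1 + b) * t) ≤ 1 + c * t := by
  have hc : 0 < c := ha.trans_le hac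
  have hct : 0 < 1 + c * t := by positivity
  rw [← Real.le_log_iff_exp_le hct]
  calc a / (1 + b) * t ≤ c / (1 + c * t) * t := by
        have : c * t ≤ b := (mul_le_of_le_one_right hc.le ht1).trans hcb
        gcongr
    _ = 1 - (1 + c * t)⁻¹ := by
        field_simp
        ring
    _ ≤ Real.log (1 + c * t) := Real.one_sub_inv_le_log_of_pos hct

lemma one_add_mul_le_exp_mul {b t : ℝ} (a : ℝ) (hb : 0 ≤ b) (ht : 0 ≤ t) :
    1 + a * t ≤ Real.exp (|a - b| * t) * (1 + b * t) := by
  have hat : a * t ≤ b * t + |a - b| * t := by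
    rw [← add_mul]
    gcongr
    linarith [le_abs_self (a - b)]
  have hprod : 0 ≤ |a - b| * t * (b * t) := by positivity
  calc 1 + a * t ≤ (|a - b| * t + 1) * (1 + b * t) := by linarith
    _ ≤ Real.exp (|a - b| * t) * (1 + b * t) := by
        gcongr
        exact Real.add_one_le_exp _

lemma exp_mul_sum_le_weightProd_one_add_mul {a b c : ℝ} {t : ℕ → ℝ} (ha : 0 < a) (hac : a ≤ c)
    (hcb : c ≤ b) (ht0 : ∀ n, 0 ≤ t (n + 1)) (ht1 : ∀ n, t (n + 1) ≤ 1) (n : ℕ) :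
    Real.exp (a / (1 + b) * ∑ j ∈ range n, t (j + 1)) ≤
      weightProd (fun n => 1 + c * t n) 0 n := by
  rw [mul_sum, Real.exp_sum]
  simp only [weightProd, zero_add]
  gcongr with j
  exact exp_div_one_add_mul_le ha hac hcb (ht0 j) (ht1 j)

lemma weightProd_one_add_mul_le_exp_mul {a b : ℝ} {t : ℕ → ℝ} (ha : 0 ≤ a) (hb : 0 ≤ b)
    (ht0 : ∀ n, 0 ≤ t (n + 1)) (m N : ℕ) :
    weightProd (fun n => 1 + a * t n) m N ≤
      Real.exp (|a - b| * ∑ j ∈ range (m + N), t (j + 1)) *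
        weightProd (fun n => 1 + b * t n) m N := by
  have hsum : ∑ j ∈ range N, t (m + j + 1) ≤ ∑ j ∈ range (m + N), t (j + 1) := by
    rw [sum_range_add]
    exact le_add_of_nonneg_left (sum_nonneg fun j _ => ht0 j)
  have hW := weightProd_nonneg (w := fun n => 1 + b * t n)
    (fun n => add_nonneg zero_le_one (mul_nonneg hb (ht0 n))) m N
  calc weightProd (fun n => 1 + a * t n) m N
      ≤ ∏ j ∈ range N, Real.exp (|a - b| * t (m + j + 1)) * (1 + b * t (m + j + 1)) :=
        prod_le_prod (fun j _ => add_nonneg zero_le_one (mul_nonneg ha (ht0 _)))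
          fun j _ => one_add_mul_le_exp_mul a hb (ht0 _)
    _ = Real.exp (|a - b| * ∑ j ∈ range N, t (m + j + 1)) *
        weightProd (fun n => 1 + b * t n) m N := by
        rw [prod_mul_distrib, mul_sum, Real.exp_sum, weightProd]
    _ ≤ Real.exp (|a - b| * ∑ j ∈ range (m + N), t (j + 1)) *
        weightProd (fun n => 1 + b * t n) m N := by gcongr

lemma exists_isStretchedExpWeight_one_add_mul {α C : ℝ} {t : ℕ → ℝ} (hC : 0 < C)
    (ht0 : ∀ n, 0 ≤ t (n + 1)) (ht1 : ∀ n, t (n + 1) ≤ 1)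
    (hlow : ∀ n : ℕ, (n : ℝ) ^ α / C ≤ ∑ j ∈ range n, t (j + 1))
    (hup : ∀ n : ℕ, ∑ j ∈ range n, t (j + 1) ≤ C * (n : ℝ) ^ α) {a b : ℝ} (ha : 0 < a)
    (hab : a ≤ b) :
    ∃ A, IsStretchedExpWeight α A (fun c n => 1 + c * t n) (Set.Icc a b) := by
  have hb : 0 < b := ha.trans_le hab
  have hpos {c : ℝ} (hc : c ∈ Set.Icc a b) : 0 < c := ha.trans_le hc.1
  refine ⟨max (1 + b) (max C ((1 + b) * C / a)), ?_, ?_, ?_, ?_, ?_⟩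
  · exact le_max_of_le_left (by linarith)
  · intro c hc n
    have := mul_nonneg (hpos hc).le (ht0 n)
    positivity
  · intro c hc n
    have := mul_le_of_le_one_right (hpos hc).le (ht1 n)
    exact le_max_of_le_left (by linarith [hc.2])
  · intro c hc n
    refine le_trans ?_ (exp_mul_sum_le_weightProd_one_add_mul ha hc.1 hc.2 ht0 ht1 n)
    calc Real.exp ((n : ℝ) ^ α / max (1 + b) (max C ((1 + b) * C / a)))
        ≤ Real.exp ((n : ℝ) ^ α / ((1 + b) * C / a)) := by
          gcongr
          exact (le_max_right _ _).trans (le_max_right _ _)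
      _ = Real.exp (a / (1 + b) * ((n : ℝ) ^ α / C)) := by
          congr 1
          field_simp
      _ ≤ Real.exp (a / (1 + b) * ∑ j ∈ range n, t (j + 1)) := by
          gcongr
          exact hlow n
  · intro c hc c' hc' m N
    have hW := weightProd_nonneg (w := fun n => 1 + c' * t n)
      (fun n => add_nonneg zero_le_one (mul_nonneg (hpos hc').le (ht0 n))) m N
    refine (weightProd_one_add_mul_le_exp_mul (hpos hc).le (hpos hc').le ht0 m N).trans ?_
    rw [mul_comm (max _ _), mul_assoc |c - c'|]
    gcongr
    refine (hup (m + N)).trans ?_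
    gcongr
    exact (le_max_left _ _).trans (le_max_right _ _)

lemma rpow_le_sum_inv_rpow {α : ℝ} (hα0 : 0 < α) (hα1 : α ≤ 1) (n : ℕ) :
    (n : ℝ) ^ α ≤ ∑ j ∈ range n, (((j + 1 : ℕ) : ℝ) ^ (1 - α))⁻¹ := by
  rcases n.eq_zero_or_pos with rfl | hn
  · simp [Real.zero_rpow hα0.ne']
  have hn' : (0 : ℝ) < n := Nat.cast_pos.mpr hn
  calc (n : ℝ) ^ α = ∑ _ ∈ range n, ((n : ℝ) ^ (1 - α))⁻¹ := by
        rw [sum_const, card_range, nsmul_eq_mul, ← Real.rpow_neg hn'.le,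
          ← Real.rpow_one_add' hn'.le]
        · ring_nf
        · linarith
    _ ≤ ∑ j ∈ range n, (((j + 1 : ℕ) : ℝ) ^ (1 - α))⁻¹ := by
        gcongr with j hj
        exact mem_range.mp hj

/-- Each summand is at most the increment of `n ^ α / α`, by Bernoulli's inequality. -/
lemma sum_inv_rpow_le {α : ℝ} (hα0 : 0 < α) (hα1 : α ≤ 1) (n : ℕ) :
    ∑ j ∈ range n, (((j + 1 : ℕ) : ℝ) ^ (1 - α))⁻¹ ≤ α⁻¹ * (n : ℝ) ^ α := by
  induction n with
  | zero => simp [Real.zero_rpow hα0.ne']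
  | succ n ih =>
    have hs : (0 : ℝ) < (n + 1 : ℕ) := by positivity
    set s : ℝ := ((n + 1 : ℕ) : ℝ) with hs_def
    have hs1 : s⁻¹ ≤ 1 := inv_le_one_of_one_le₀ (by rw [hs_def]; exact_mod_cast n.succ_pos)
    have hns : (n : ℝ) = s * (1 + -s⁻¹) := by
      rw [hs_def]
      push_cast
      field_simp
      ring
    have hbernoulli : (1 + -s⁻¹) ^ α ≤ 1 + α * -s⁻¹ := by
      refine rpow_one_add_le_one_add_mul_self ?_ hα0.le hα1
      exact neg_le_neg hs1
    have hnα : (n : ℝ) ^ α ≤ s ^ α * (1 + α * -s⁻¹) := by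
      rw [hns, Real.mul_rpow hs.le (by linarith [hs1])]
      gcongr
    have hterm : (s ^ (1 - α))⁻¹ = s ^ α * s⁻¹ := by
      rw [← Real.rpow_neg hs.le, ← Real.rpow_neg_one, ← Real.rpow_add hs]
      ring_nf
    calc ∑ j ∈ range (n + 1), (((j + 1 : ℕ) : ℝ) ^ (1 - α))⁻¹
        ≤ α⁻¹ * (n : ℝ) ^ α + s ^ α * s⁻¹ := by
          rw [sum_range_succ, ← hterm]
          gcongr
      _ ≤ α⁻¹ * (s ^ α * (1 + α * -s⁻¹)) + s ^ α * s⁻¹ := by gcongr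
      _ = α⁻¹ * s ^ α := by
          field_simp
          ring

lemma exists_mem_nhds_isStretchedExpWeight_one_add_div {α c : ℝ} (hα0 : 0 < α) (hα1 : α ≤ 1)
    (hc : 0 < c) : ∃ A, ∃ I ∈ 𝓝 c,
      IsStretchedExpWeight α A (fun a n => 1 + a / (n : ℝ) ^ (1 - α)) I := by
  have hpow (n : ℕ) : 1 ≤ ((n + 1 : ℕ) : ℝ) ^ (1 - α) :=
    Real.one_le_rpow (mod_cast n.succ_pos) (sub_nonneg.mpr hα1)
  have hαinv : 1 ≤ α⁻¹ := (one_le_inv₀ hα0).mpr hα1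
  obtain ⟨A, hA⟩ := exists_isStretchedExpWeight_one_add_mul (α := α) (inv_pos.mpr hα0)
    (t := fun n => ((n : ℝ) ^ (1 - α))⁻¹) (fun n => by positivity)
    (fun n => inv_le_one_of_one_le₀ (hpow n))
    (fun n => (div_le_self (by positivity) hαinv).trans (rpow_le_sum_inv_rpow hα0 hα1 n))
    (sum_inv_rpow_le hα0 hα1) (half_pos hc) (by linarith : c / 2 ≤ 2 * c)
  exact ⟨A, Set.Icc (c / 2) (2 * c), Icc_mem_nhds (by linarith) (by linarith),
    by simpa only [div_eq_mul_inv] using hA⟩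

end OneAddMul

/-- Example 2.4 of the paper, case `X = c₀(ℕ)`, `w n (λ) = 1 + λ / n^(1-α)`. -/
theorem stmt_12 (d : ℕ) (hd : 1 ≤ d)
    (α : ℝ) (hα0 : 0 < α) (hα1 : α < 1 / (d : ℝ))
    (T : (Fin d → ℝ) → ((Fin d → c0C) →L[ℂ] (Fin d → c0C)))
    (hT : ∀ lam : Fin d → ℝ, (∀ i, 0 < lam i) →
      IsProductShiftC0 d (fun a n => 1 + a / (n : ℝ) ^ (1 - α)) (T lam) lam) :
    CommonHypercyclicAlgebraCWC0 d {lam | ∀ i, 0 < lam i} T := by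
  have hα1' : α ≤ 1 := hα1.le.trans (div_le_one_of_le₀ (mod_cast hd) d.cast_nonneg)
  exact stmt_12_general d hd α hα0 hα1 _ _ (fun lam (hlam : ∀ i, 0 < lam i) i =>
    exists_mem_nhds_isStretchedExpWeight_one_add_div hα0 hα1' (hlam i)) T hT
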